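/- Let b ∈ ℕ⁺, τ = τ_RZPT^b, let A be a TS with event set E = {e₁,…,e_n}, let A' be a spanning tree of A, and let s₁ −e→ s'₁, …, s_k −e→ s'_k be exactly the e-labeled transitions of A (k ≥ 1). An ESSA (e, s) of A (so δ(s,e) is undefined, i.e., s ∉ {s₁,…,s_k}) is solved by some τ-region of A if and only if there exist a pair event (m,n) ∈ E_τ and an abstract τ-region (sup, abs) of A such that: (1) abs(e) ≡ −m + n (mod b+1); (2) ψ_{s₁}·abs ≡ m − sup(ι) (mod b+1); (3) (ψ_{s₁} − ψ_{sᵢ})·abs ≡ 0 (mod b+1) for all i ∈ {2,…,k}; and (4) (ψ_{s₁} − ψ_s)·abs ≢ 0 (mod b+1). -/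

import Mathlib

namespace PNS

/-- Events of a (b-bounded) type of nets: either a pair `(m,n)` or a group element `z ∈ {0,…,b}`. -/
inductive BEvent : Type
  | pair : ℕ → ℕ → BEvent
  | num : ℕ → BEvent
  deriving DecidableEq

/-- A type of nets `τ = (S_τ, E_τ, δ_τ)` with `S_τ ⊆ ℕ`. -/
structure NetType : Type where
  states : Set ℕ
  events : Set BEvent
  delta : ℕ → BEvent → Option ℕ

def deltaPT (b : ℕ) : ℕ → BEvent → Option ℕ
  | s, .pair m n => if m ≤ s ∧ s - m + n ≤ b then some (s - m + n) else none
  | _, .num _ => none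

def deltaZPT (b : ℕ) : ℕ → BEvent → Option ℕ
  | s, .pair m n => if m ≤ s ∧ s - m + n ≤ b then some (s - m + n) else none
  | s, .num z => some ((s + z) % (b + 1))

def deltaRZPT (b : ℕ) : ℕ → BEvent → Option ℕ
  | s, .pair m n => if s = m ∧ n ≤ b then some n else none
  | s, .num z => some ((s + z) % (b + 1))

/-- The type of `b`-bounded P/T-nets. -/
def tauPT (b : ℕ) : NetType :=
  ⟨{s | s ≤ b}, {e | ∃ m n, e = BEvent.pair m n ∧ m ≤ b ∧ n ≤ b}, deltaPT b⟩

/-- The type of pure `b`-bounded P/T-nets. -/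
def tauPPT (b : ℕ) : NetType :=
  ⟨{s | s ≤ b}, {e | ∃ m n, e = BEvent.pair m n ∧ m ≤ b ∧ n ≤ b ∧ (m = 0 ∨ n = 0)}, deltaPT b⟩

/-- The type of `ℤ_{b+1}`-extended `b`-bounded P/T-nets. -/
def tauZPT (b : ℕ) : NetType :=
  ⟨{s | s ≤ b},
   {e | (∃ m n, e = BEvent.pair m n ∧ m ≤ b ∧ n ≤ b ∧ ¬(m = 0 ∧ n = 0)) ∨
        (∃ z, e = BEvent.num z ∧ z ≤ b)}, deltaZPT b⟩

/-- The type of pure `ℤ_{b+1}`-extended `b`-bounded P/T-nets. -/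
def tauZPPT (b : ℕ) : NetType :=
  ⟨{s | s ≤ b},
   {e | (∃ m n, e = BEvent.pair m n ∧ m ≤ b ∧ n ≤ b ∧ ¬(m = 0 ∧ n = 0) ∧ (m = 0 ∨ n = 0)) ∨
        (∃ z, e = BEvent.num z ∧ z ≤ b)}, deltaZPT b⟩

/-- The type of restricted `ℤ_{b+1}`-extended `b`-bounded P/T-nets. -/
def tauRZPT (b : ℕ) : NetType :=
  ⟨{s | s ≤ b},
   {e | (∃ m n, e = BEvent.pair m n ∧ m ≤ b ∧ n ≤ b ∧ ¬(m = 0 ∧ n = 0)) ∨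
        (∃ z, e = BEvent.num z ∧ z ≤ b)}, deltaRZPT b⟩

/-- A (deterministic, initialized) transition system with states `S`, events `E`. -/
structure TS (S E : Type) : Type where
  delta : S → E → Option S
  init : S

def TS.Reachable {S E : Type} (A : TS S E) (s : S) : Prop :=
  Relation.ReflTransGen (fun x y => ∃ e, A.delta x e = some y) A.init s

/-- Every state is reachable from the initial state. -/
def TS.Initialized {S E : Type} (A : TS S E) : Prop :=
  ∀ s, A.Reachable s

/-- A `τ`-region `(sup, sig)` of a TS `A`. -/
structure IsRegion (τ : NetType) {S E : Type} (A : TS S E)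
    (sup : S → ℕ) (sig : E → BEvent) : Prop where
  sup_mem : ∀ s, sup s ∈ τ.states
  sig_mem : ∀ e, sig e ∈ τ.events
  edge : ∀ s e s', A.delta s e = some s' → τ.delta (sup s) (sig e) = some (sup s')

/-- `A` has the `τ`-state separation property. -/
def HasSSP (τ : NetType) {S E : Type} (A : TS S E) : Prop :=
  ∀ s s' : S, s ≠ s' → ∃ sup sig, IsRegion τ A sup sig ∧ sup s ≠ sup s'

/-- `A` has the `τ`-event state separation property. -/
def HasESSP (τ : NetType) {S E : Type} (A : TS S E) : Prop :=
  ∀ (e : E) (s : S), A.delta s e = none →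
    ∃ sup sig, IsRegion τ A sup sig ∧ τ.delta (sup s) (sig e) = none

def Solvable (τ : NetType) {S E : Type} (A : TS S E) : Prop :=
  HasESSP τ A ∧ HasSSP τ A

def sigMinus : BEvent → ℕ
  | .pair m _ => m
  | .num _ => 0

def sigPlus : BEvent → ℕ
  | .pair _ n => n
  | .num _ => 0

def sigAbs : BEvent → ℕ
  | .pair _ _ => 0
  | .num z => z

open Classical in
/-- The linear TS `s₀ −ev 0→ s₁ −ev 1→ … −ev (m-1)→ s_m` on the `m+1` pairwise
distinct states `Fin (m+1)` with initial state `0`. -/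
noncomputable def linTS {E : Type} (m : ℕ) (ev : ℕ → E) : TS (Fin (m + 1)) E where
  init := ⟨0, Nat.succ_pos m⟩
  delta s e :=
    if h : (s : ℕ) < m ∧ ev (s : ℕ) = e then some ⟨(s : ℕ) + 1, Nat.succ_lt_succ h.1⟩
    else none

/-- The linear TS whose sequence of edge labels is the list `l`. -/
noncomputable def linOfList {E : Type} (l : List E) (d : E) : TS (Fin (l.length + 1)) E :=
  linTS l.length (fun i => l.getD i d)

/-- A spanning tree of `A`, represented by the parent function of the tree,
a depth function witnessing well-foundedness, and the Parikh vectors `count s`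
of the unique tree paths from the initial state to the states. -/
structure SpanTree {S E : Type} [DecidableEq E] (A : TS S E) : Type where
  parent : S → Option (S × E)
  depth : S → ℕ
  count : S → E → ℕ
  parent_init : parent A.init = none
  parent_ne : ∀ s, s ≠ A.init → ∃ p e, parent s = some (p, e)
  parent_edge : ∀ s p e, parent s = some (p, e) → A.delta p e = some s
  depth_lt : ∀ s p e, parent s = some (p, e) → depth p < depth s
  count_init : ∀ e, count A.init e = 0
  count_parent : ∀ s p e0 e, parent s = some (p, e0) →
    count s e = count p e + (if e = e0 then 1 else 0)

/-- `abs` is an abstract signature of `A` (w.r.t. the bound `b`): some support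
`sup` turns it into an abstract region, i.e. `sup s' = sup s + abs e (mod b+1)`
for every edge `s −e→ s'`. -/
def AbstractSig (b : ℕ) {S E : Type} (A : TS S E) (abs : E → ZMod (b + 1)) : Prop :=
  ∃ sup : S → ZMod (b + 1), ∀ s e s', A.delta s e = some s' → sup s' = sup s + abs e

/-- `s −e→ s'` is a chord of the spanning tree `T`: an edge of `A` that is not a tree edge. -/
def IsChord {S E : Type} [DecidableEq E] {A : TS S E} (T : SpanTree A)
    (s : S) (e : E) (s' : S) : Prop :=
  A.delta s e = some s' ∧ T.parent s' ≠ some (s, e)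

/-- The fundamental cycle `ψ_t` of the chord `t = s −e→ s'`, evaluated at the event `e'`. -/
noncomputable def fundCycle (b : ℕ) {S E : Type} [DecidableEq E] {A : TS S E}
    (T : SpanTree A) (s : S) (e : E) (s' : S) (e' : E) : ZMod (b + 1) :=
  ((T.count s e' : ZMod (b + 1)) - (T.count s' e' : ZMod (b + 1))) +
    (if e' = e then 1 else 0)

theorem natCast_inj_of_le {b x y : ℕ} (hx : x ≤ b) (hy : y ≤ b)
    (h : (x : ZMod (b + 1)) = (y : ZMod (b + 1))) : x = y := by
  have h' := (ZMod.natCast_eq_natCast_iff' x y (b + 1)).1 h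
  rwa [Nat.mod_eq_of_lt (by omega), Nat.mod_eq_of_lt (by omega)] at h'

theorem abstract_edge {b : ℕ} {S E : Type} {A : TS S E} {sup : S → ℕ} {absN : E → ℕ}
    (h : IsRegion (tauRZPT b) A sup (fun e' => BEvent.num (absN e')))
    {s s' : S} {e : E} (he : A.delta s e = some s') :
    (sup s' : ZMod (b + 1)) = sup s + absN e := by
  have h1 := h.edge s e s' he
  simp only [tauRZPT, deltaRZPT, Option.some.injEq] at h1
  rw [← h1, ZMod.natCast_mod, Nat.cast_add]

theorem sup_eq_count {b : ℕ} {S E : Type} [Fintype E] [DecidableEq E] {A : TS S E}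
    (T : SpanTree A) {sup : S → ℕ} {absN : E → ℕ}
    (h : IsRegion (tauRZPT b) A sup (fun e' => BEvent.num (absN e'))) (s : S) :
    (∑ e' : E, (T.count s e' : ZMod (b + 1)) * (absN e' : ZMod (b + 1))) =
      (sup s : ZMod (b + 1)) - (sup A.init : ZMod (b + 1)) := by
  induction hd : T.depth s using Nat.strong_induction_on generalizing s with
  | _ d ih =>
    by_cases hs : s = A.init
    · subst hs
      simp [T.count_init]
    · obtain ⟨p, e, hp⟩ := T.parent_ne s hs
      have h1 := ih (T.depth p) (hd ▸ T.depth_lt s p e hp) p rfl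
      have h2 := abstract_edge h (T.parent_edge s p e hp)
      have h3 : ∀ e', (T.count s e' : ZMod (b + 1)) =
          T.count p e' + (if e' = e then 1 else 0) := by
        intro e'
        rw [T.count_parent s p e e' hp]
        push_cast
        rfl
      simp only [h3, add_mul, Finset.sum_add_distrib, h1, h2]
      simp
      ring

/-- Let `τ = τ_RZPT^b`, let `T` be a spanning tree of `A`, and let
`src 0 −e→ ·, …, src (k-1) −e→ ·` be exactly the `e`-labeled transitions of `A`.
An ESSA `(e, s)` of `A` is solved by some `τ`-region of `A` iff there are a pair
event `(m,n) ∈ E_τ` and an abstract `τ`-region `(sup, abs)` of `A` such that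
(1) `abs(e) ≡ −m+n`, (2) `ψ_{s₁}·abs ≡ m − sup(ι)`, (3) `(ψ_{s₁}−ψ_{sᵢ})·abs ≡ 0`
for all `i`, and (4) `(ψ_{s₁}−ψ_s)·abs ≢ 0` (all modulo `b+1`). -/
theorem stmt18 (b : ℕ) (hb : 1 ≤ b)
    {S E : Type} [Fintype E] [DecidableEq E] (A : TS S E) (hinit : A.Initialized)
    (T : SpanTree A) (e : E) (k : ℕ) (hk : 0 < k) (src : Fin k → S)
    (hinj : Function.Injective src)
    (hsrc : ∀ t : S, (∃ t', A.delta t e = some t') ↔ ∃ i, src i = t)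
    (s : S) (hs : A.delta s e = none) :
    (∃ sup sig, IsRegion (tauRZPT b) A sup sig ∧
        (tauRZPT b).delta (sup s) (sig e) = none) ↔
      ∃ m n : ℕ, m ≤ b ∧ n ≤ b ∧ ¬(m = 0 ∧ n = 0) ∧
        ∃ (sup : S → ℕ) (absN : E → ℕ),
          IsRegion (tauRZPT b) A sup (fun e' => BEvent.num (absN e')) ∧
          (absN e : ZMod (b + 1)) = (n : ZMod (b + 1)) - (m : ZMod (b + 1)) ∧
          (∑ e' : E, (T.count (src ⟨0, hk⟩) e' : ZMod (b + 1)) * (absN e' : ZMod (b + 1))) =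
            (m : ZMod (b + 1)) - (sup A.init : ZMod (b + 1)) ∧
          (∀ i : Fin k,
            (∑ e' : E, ((T.count (src ⟨0, hk⟩) e' : ZMod (b + 1)) -
                (T.count (src i) e' : ZMod (b + 1))) * (absN e' : ZMod (b + 1))) = 0) ∧
          (∑ e' : E, ((T.count (src ⟨0, hk⟩) e' : ZMod (b + 1)) -
              (T.count s e' : ZMod (b + 1))) * (absN e' : ZMod (b + 1))) ≠ 0 := by
  have hdiff : ∀ (sup : S → ℕ) (absN : E → ℕ),
      IsRegion (tauRZPT b) A sup (fun e' => BEvent.num (absN e')) → ∀ t u : S,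
      (∑ e' : E, ((T.count t e' : ZMod (b + 1)) -
          (T.count u e' : ZMod (b + 1))) * (absN e' : ZMod (b + 1))) =
        (sup t : ZMod (b + 1)) - sup u := by
    intro sup absN h t u
    simp only [sub_mul, Finset.sum_sub_distrib, sup_eq_count T h]
    ring
  constructor
  · rintro ⟨sup, sig, hR, hsol⟩
    cases hsig : sig e with
    | num z => simp [hsig, tauRZPT, deltaRZPT] at hsol
    | pair m n =>
      have hmem := hR.sig_mem e
      simp only [hsig, tauRZPT, Set.mem_setOf_eq, BEvent.pair.injEq, reduceCtorEq, false_and,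
        exists_false, or_false] at hmem
      obtain ⟨m', n', ⟨rfl, rfl⟩, hm, hn, hmn⟩ := hmem
      let absN : E → ℕ := fun e' => match sig e' with
        | .num z => z
        | .pair m n => (n + (b + 1) - m) % (b + 1)
      have hab : IsRegion (tauRZPT b) A sup (fun e' => BEvent.num (absN e')) := by
        refine ⟨hR.sup_mem, ?_, ?_⟩
        · intro e'
          refine Or.inr ⟨absN e', rfl, ?_⟩
          have h1 := hR.sig_mem e'
          cases h2 : sig e' with
          | num z =>
            simpa [absN, h2, tauRZPT] using h1
          | pair p q =>
            simp only [absN, h2]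
            exact Nat.lt_succ_iff.1 (Nat.mod_lt _ (Nat.succ_pos b))
        · intro t e' t' ht
          have h1 := hR.edge t e' t' ht
          have h3 := hR.sig_mem e'
          cases h2 : sig e' with
          | num z =>
            simpa [absN, h2, tauRZPT, deltaRZPT] using h1
          | pair p q =>
            simp only [h2, tauRZPT, deltaRZPT, Option.ite_none_right_eq_some,
              Option.some.injEq] at h1
            obtain ⟨⟨hp, hq⟩, hq'⟩ := h1
            have hpb : sup t ≤ b := hR.sup_mem t
            simp only [tauRZPT, deltaRZPT, absN, h2, Option.some.injEq]
            rw [Nat.add_mod_mod, show sup t + (q + (b + 1) - p) = q + (b + 1) by omega,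
              Nat.add_mod_right, Nat.mod_eq_of_lt (by omega), hq']
      have hsup : ∀ i, sup (src i) = m := by
        intro i
        obtain ⟨t', ht'⟩ := (hsrc (src i)).2 ⟨i, rfl⟩
        have h1 := hR.edge _ _ _ ht'
        simp only [hsig, tauRZPT, deltaRZPT, Option.ite_none_right_eq_some] at h1
        exact h1.1.1
      have hsm : sup s ≠ m := by
        intro h
        simp [hsig, tauRZPT, deltaRZPT, h, hn] at hsol
      refine ⟨m, n, hm, hn, hmn, sup, absN, hab, ?_, ?_, ?_, ?_⟩
      · simp only [absN, hsig]
        rw [ZMod.natCast_mod, Nat.cast_sub (by omega), Nat.cast_add, ZMod.natCast_self, add_zero]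
      · rw [sup_eq_count T hab, hsup]
      · intro i
        rw [hdiff sup absN hab, hsup, hsup, sub_self]
      · rw [hdiff sup absN hab, hsup, sub_ne_zero]
        intro h
        exact hsm (natCast_inj_of_le hm (hR.sup_mem s) h).symm
  · rintro ⟨m, n, hm, hn, hmn, sup, absN, hab, h1, h2, h3, h4⟩
    rw [sup_eq_count T hab] at h2
    have h2' := sub_left_injective h2
    have h0 : sup (src ⟨0, hk⟩) = m := natCast_inj_of_le (hab.sup_mem _) hm h2'
    have hsup : ∀ i, sup (src i) = m := by
      intro i
      have h5 := h3 i
      rw [hdiff sup absN hab, sub_eq_zero, h0] at h5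
      exact (natCast_inj_of_le hm (hab.sup_mem _) h5).symm
    refine ⟨sup, fun e' => if e' = e then .pair m n else .num (absN e'),
      ⟨hab.sup_mem, ?_, ?_⟩, ?_⟩
    · intro e'
      by_cases he : e' = e
      · simp only [he, if_true]
        exact Or.inl ⟨m, n, rfl, hm, hn, hmn⟩
      · simp only [he, if_false]
        exact hab.sig_mem e'
    · intro t e' t' ht
      by_cases he : e' = e
      · subst he
        obtain ⟨i, rfl⟩ := (hsrc t).1 ⟨t', ht⟩
        have h5 := abstract_edge hab ht
        rw [h1, hsup i, add_sub_cancel] at h5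
        have h6 := natCast_inj_of_le (hab.sup_mem t') hn h5
        simp [tauRZPT, deltaRZPT, hsup i, hn, h6]
      · simp only [he, if_false]
        exact hab.edge t e' t' ht
    · rw [hdiff sup absN hab, h0, sub_ne_zero] at h4
      have h5 : sup s ≠ m := fun h => h4 (by rw [h])
      simp [tauRZPT, deltaRZPT, h5]

end PNS
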